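/- Let d ≥ 1, 0 < μ < 2, κ₀ > 0. Then f_E is a uniformly temperate weight for the metric g_E, uniformly in E ∈ (0,1]; that is: (a) there exist c, C > 0 such that for all E ∈ (0,1] and all x, y, η ∈ ℝ^d, if |y|²/⟨x⟩² + |η|²/f_E(x)² ≤ c then f_E(x)/C ≤ f_E(x+y) ≤ C f_E(x); and (b) there exist C', N > 0 such that for all E ∈ (0,1] and all x, y, ξ, η ∈ ℝ^d, f_E(y) ≤ C' f_E(x) ( 1 + f_E(y)²|x−y|² + ⟨y⟩²|ξ−η|² )^N. -/

import Mathlib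

open Real

noncomputable section

/-- The Japanese bracket `⟨x⟩ = (1+|x|²)^{1/2}`. -/
def jap {d : ℕ} (x : EuclideanSpace ℝ (Fin d)) : ℝ := Real.sqrt (1 + ‖x‖ ^ 2)

/-- The energy-dependent weight `f_E(x) = (κ₀^{-2}E + (1-μ/2)^{-1}⟨x⟩^{-μ})^{1/2}`. -/
def fE {d : ℕ} (μ κ₀ E : ℝ) (x : EuclideanSpace ℝ (Fin d)) : ℝ :=
  Real.sqrt ((κ₀ ^ 2)⁻¹ * E + (1 - μ/2)⁻¹ * jap x ^ (-μ))

/-- The Hörmander metric `g_{E,(x,ξ)}(v_x,v_ξ) = |v_x|²/⟨x⟩² + |v_ξ|²/f_E(x)²`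
(it depends on the base point only through `x`). -/
def gMet {d : ℕ} (μ κ₀ E : ℝ) (x vx vξ : EuclideanSpace ℝ (Fin d)) : ℝ :=
  ‖vx‖ ^ 2 / jap x ^ 2 + ‖vξ‖ ^ 2 / fE μ κ₀ E x ^ 2

lemma le_of_sq_le_sq_aux {a b : ℝ} (h : a ^ 2 ≤ b ^ 2) (hb : 0 ≤ b) : a ≤ b :=
  (le_abs_self a).trans (abs_le_of_sq_le_sq h hb)

lemma aux_jap_one {d : ℕ} (x : EuclideanSpace ℝ (Fin d)) : 1 ≤ jap x := by
  unfold jap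
  rw [Real.one_le_sqrt]
  nlinarith [sq_nonneg ‖x‖]

lemma aux_jap_sq {d : ℕ} (x : EuclideanSpace ℝ (Fin d)) : jap x ^ 2 = 1 + ‖x‖ ^ 2 := by
  unfold jap
  exact Real.sq_sqrt (by positivity)

lemma aux_jap_lip {d : ℕ} (x y : EuclideanSpace ℝ (Fin d)) : jap x ≤ jap y + ‖x - y‖ := by
  have h1 := aux_jap_sq x
  have h2 := aux_jap_sq y
  have h3 := aux_jap_one y
  have h4 : ‖x‖ ≤ ‖y‖ + ‖x - y‖ := by
    have := norm_add_le y (x - y)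
    simpa using this
  have h5 : ‖y‖ ≤ jap y := by
    refine le_of_sq_le_sq_aux ?_ (by linarith)
    linarith
  have h6 := norm_nonneg (x - y)
  have h7 := norm_nonneg x
  have h8 := norm_nonneg y
  refine le_of_sq_le_sq_aux ?_ (by linarith)
  have h9 : ‖x‖ ^ 2 ≤ (‖y‖ + ‖x - y‖) ^ 2 := by gcongr
  nlinarith [mul_le_mul_of_nonneg_right h5 h6]

lemma aux_b {μ : ℝ} (hμ0 : 0 < μ) (hμ2 : μ < 2) : 1 ≤ (1 - μ/2)⁻¹ := by
  rw [one_le_inv₀ (by linarith)]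
  linarith

lemma aux_fE_sq {d : ℕ} {μ κ₀ E : ℝ} (hμ0 : 0 < μ) (hμ2 : μ < 2) (hE : 0 < E)
    (x : EuclideanSpace ℝ (Fin d)) :
    fE μ κ₀ E x ^ 2 = (κ₀ ^ 2)⁻¹ * E + (1 - μ/2)⁻¹ * jap x ^ (-μ) := by
  unfold fE
  have := aux_b hμ0 hμ2
  have := aux_jap_one x
  exact Real.sq_sqrt (by positivity)

lemma aux_fE_nonneg {d : ℕ} {μ κ₀ E : ℝ} (x : EuclideanSpace ℝ (Fin d)) :
    0 ≤ fE μ κ₀ E x := Real.sqrt_nonneg _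

lemma aux_ratio {d : ℕ} {μ κ₀ E : ℝ} (hμ0 : 0 < μ) (hμ2 : μ < 2) (hE : 0 < E)
    (u v : EuclideanSpace ℝ (Fin d)) (t : ℝ) (ht : 1 ≤ t)
    (h : jap u ^ μ ≤ t * jap v ^ μ) : fE μ κ₀ E v ^ 2 ≤ t * fE μ κ₀ E u ^ 2 := by
  rw [aux_fE_sq hμ0 hμ2 hE, aux_fE_sq hμ0 hμ2 hE]
  have hb := aux_b hμ0 hμ2
  have hu := aux_jap_one u
  have hv := aux_jap_one v
  have h1 : jap v ^ (-μ) ≤ t * jap u ^ (-μ) := by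
    rw [Real.rpow_neg (by linarith), Real.rpow_neg (by linarith)]
    have hu' : 0 < jap u ^ μ := by positivity
    have hv' : 0 < jap v ^ μ := by positivity
    rw [← div_eq_mul_inv, le_div_iff₀ hu', inv_mul_le_iff₀ hv']
    linarith
  have h2 : 0 ≤ (κ₀ ^ 2)⁻¹ * E := by positivity
  have h3 := mul_le_mul_of_nonneg_left h1 (by linarith : 0 ≤ (1 - μ/2)⁻¹)
  nlinarith

lemma aux_double {d : ℕ} {μ : ℝ} (hμ0 : 0 < μ) (hμ2 : μ < 2)
    (u v : EuclideanSpace ℝ (Fin d)) (h : jap u ≤ 2 * jap v) :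
    jap u ^ μ ≤ 4 * jap v ^ μ := by
  have hu := aux_jap_one u
  have hv := aux_jap_one v
  calc jap u ^ μ ≤ (2 * jap v) ^ μ := Real.rpow_le_rpow (by linarith) h hμ0.le
    _ = 2 ^ μ * jap v ^ μ := Real.mul_rpow (by norm_num) (by linarith)
    _ ≤ 4 * jap v ^ μ := by
      have : (2:ℝ) ^ μ ≤ 2 ^ (2:ℝ) := Real.rpow_le_rpow_of_exponent_le (by norm_num) hμ2.le
      have h4 : (2:ℝ) ^ (2:ℝ) = 4 := by norm_num
      rw [h4] at this
      gcongr

lemma aux_double_fE {d : ℕ} {μ κ₀ E : ℝ} (hμ0 : 0 < μ) (hμ2 : μ < 2) (hE : 0 < E)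
    (u v : EuclideanSpace ℝ (Fin d)) (h : jap u ≤ 2 * jap v) :
    fE μ κ₀ E v ≤ 2 * fE μ κ₀ E u := by
  have h1 := aux_ratio (κ₀ := κ₀) hμ0 hμ2 hE u v 4 (by norm_num) (aux_double hμ0 hμ2 u v h)
  have h2 := aux_fE_nonneg (μ := μ) (κ₀ := κ₀) (E := E) u
  refine le_of_sq_le_sq_aux ?_ (by linarith)
  linarith

lemma aux_main {d : ℕ} {μ κ₀ E : ℝ} (hμ0 : 0 < μ) (hμ2 : μ < 2) (hE : 0 < E)
    (x y : EuclideanSpace ℝ (Fin d)) :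
    jap x ^ μ ≤ (4 * (1 + fE μ κ₀ E y ^ 2 * ‖x - y‖ ^ 2)) * jap y ^ μ := by
  have hx := aux_jap_one x
  have hy := aux_jap_one y
  have hy' : 0 < jap y ^ μ := by positivity
  rcases le_or_gt (jap x) (2 * jap y) with h | h
  · have h1 := aux_double hμ0 hμ2 x y h
    have h2 : 0 ≤ fE μ κ₀ E y ^ 2 * ‖x - y‖ ^ 2 * jap y ^ μ := by positivity
    nlinarith
  · have h1 := aux_jap_lip x y
    have h2 : (jap x / 2) ^ 2 ≤ ‖x - y‖ ^ 2 := by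
      have : jap x / 2 ≤ ‖x - y‖ := by linarith
      gcongr
    have h3 : 1 ≤ fE μ κ₀ E y ^ 2 * jap y ^ μ := by
      rw [aux_fE_sq hμ0 hμ2 hE, Real.rpow_neg (by linarith), add_mul, mul_assoc (1 - μ/2)⁻¹,
        inv_mul_cancel₀ hy'.ne', mul_one]
      have hb := aux_b hμ0 hμ2
      have : 0 ≤ (κ₀ ^ 2)⁻¹ * E * jap y ^ μ := by positivity
      linarith
    have h4 : jap x ^ μ ≤ jap x ^ 2 := by
      rw [← Real.rpow_natCast]
      exact Real.rpow_le_rpow_of_exponent_le hx (by exact_mod_cast hμ2.le)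
    have h5 := mul_le_mul_of_nonneg_right h3 (sq_nonneg ‖x - y‖)
    nlinarith

/-- `f_E` is a uniformly temperate weight function for the metric `g_E`,
uniformly in `E ∈ (0,1]` (Lemma 4.3 (ii)). -/
theorem stmt_17 (d : ℕ) (hd : 1 ≤ d) (μ κ₀ : ℝ)
    (hμ0 : 0 < μ) (hμ2 : μ < 2) (hκ₀ : 0 < κ₀) :
    (∃ c C : ℝ, 0 < c ∧ 0 < C ∧ ∀ E ∈ Set.Ioc (0:ℝ) 1,
      ∀ x y η : EuclideanSpace ℝ (Fin d),
        ‖y‖ ^ 2 / jap x ^ 2 + ‖η‖ ^ 2 / fE μ κ₀ E x ^ 2 ≤ c →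
          fE μ κ₀ E x / C ≤ fE μ κ₀ E (x + y) ∧ fE μ κ₀ E (x + y) ≤ C * fE μ κ₀ E x) ∧
    (∃ C' N : ℝ, 0 < C' ∧ 0 < N ∧ ∀ E ∈ Set.Ioc (0:ℝ) 1,
      ∀ x y ξ η : EuclideanSpace ℝ (Fin d),
        fE μ κ₀ E y ≤ C' * fE μ κ₀ E x *
          (1 + fE μ κ₀ E y ^ 2 * ‖x - y‖ ^ 2 + jap y ^ 2 * ‖ξ - η‖ ^ 2) ^ N) := by
  refine ⟨⟨1/4, 2, by norm_num, by norm_num, ?_⟩, ⟨2, 1/2, by norm_num, by norm_num, ?_⟩⟩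
  · intro E hE x y η h
    have hx := aux_jap_one x
    have h1 : ‖y‖ ≤ jap x / 2 := by
      have h2 : 0 ≤ ‖η‖ ^ 2 / fE μ κ₀ E x ^ 2 := by positivity
      have h3 : ‖y‖ ^ 2 / jap x ^ 2 ≤ 1/4 := by linarith
      rw [div_le_iff₀ (by positivity)] at h3
      refine le_of_sq_le_sq_aux ?_ (by linarith)
      linarith
    have h4 := aux_jap_lip (x + y) x
    have h5 := aux_jap_lip x (x + y)
    have e1 : ‖x + y - x‖ = ‖y‖ := by congr 1; abel
    have e2 : ‖x - (x + y)‖ = ‖y‖ := by rw [← norm_neg]; congr 1; abel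
    rw [e1] at h4
    rw [e2] at h5
    constructor
    · have := aux_double_fE (κ₀ := κ₀) hμ0 hμ2 hE.1 (x + y) x (by linarith)
      linarith
    · exact aux_double_fE hμ0 hμ2 hE.1 x (x + y) (by linarith)
  · intro E hE x y ξ η
    have h0 : 0 ≤ fE μ κ₀ E y ^ 2 * ‖x - y‖ ^ 2 := by positivity
    have h1 := aux_ratio (κ₀ := κ₀) hμ0 hμ2 hE.1 x y _ (by linarith)
      (aux_main (κ₀ := κ₀) hμ0 hμ2 hE.1 x y)
    have h2 : 0 ≤ jap y ^ 2 * ‖ξ - η‖ ^ 2 := by positivity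
    have h3 := aux_fE_nonneg (μ := μ) (κ₀ := κ₀) (E := E) x
    rw [← Real.sqrt_eq_rpow]
    refine le_of_sq_le_sq_aux ?_ (by positivity)
    rw [mul_pow, Real.sq_sqrt (by linarith)]
    have h4 : 0 ≤ jap y ^ 2 * ‖ξ - η‖ ^ 2 * fE μ κ₀ E x ^ 2 := by positivity
    nlinarith
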